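/- For every convex body K ⊆ ℝ^d, the covering parameter satisfies C(K) ≤ coin(K). -/

import Mathlib

open Set Pointwise

section Defs

variable {V : Type*} [NormedAddCommGroup V] [NormedSpace ℝ V]

/-- A convex body: compact, convex, with nonempty interior. -/
def IsConvexBody (K : Set V) : Prop :=
  IsCompact K ∧ Convex ℝ K ∧ (interior K).Nonempty

/-- `K` can be covered by `m` homothets of ratio `lam`. -/
def CoversWith (K : Set V) (lam : ℝ) (m : ℕ) : Prop :=
  ∃ t : Fin m → V, K ⊆ ⋃ i, (fun x => lam • x + t i) '' K

/-- The `m`-covering number `γ_m(K)`. -/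
noncomputable def gammaC (m : ℕ) (K : Set V) : ℝ :=
  sInf {lam : ℝ | 0 < lam ∧ CoversWith K lam m}

/-- The covering index `coin(K)`. -/
noncomputable def coin (K : Set V) : ℝ :=
  sInf {r : ℝ | ∃ m : ℕ, 0 < m ∧ gammaC m K ≤ 1 / 2 ∧ r = (m : ℝ) / (1 - gammaC m K)}

/-- The weak covering index `wcoin(K)`. -/
noncomputable def wcoin (K : Set V) : ℝ :=
  sInf {r : ℝ | ∃ m : ℕ, 0 < m ∧ gammaC m K < 1 ∧ r = (m : ℝ) / (1 - gammaC m K)}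

/-- `N_λ(K)`: the least number of translates of `λ • K` needed to cover `K`. -/
noncomputable def covN (lam : ℝ) (K : Set V) : ℕ :=
  sInf {n : ℕ | CoversWith K lam n}

/-- A convex body is tightly covered if for every `0 < λ < 1` it contains `N_λ(K)`
points no two of which lie in a common homothet `λ • K + t`. -/
def TightlyCovered (K : Set V) : Prop :=
  ∀ lam : ℝ, 0 < lam → lam < 1 →
    ∃ p : Fin (covN lam K) → V, (∀ i, p i ∈ K) ∧
      ∀ i j, i ≠ j → ∀ t : V,
        ¬(p i ∈ (fun x => lam • x + t) '' K ∧ p j ∈ (fun x => lam • x + t) '' K)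

/-- The covering parameter `C(K)` of Swanepoel. -/
noncomputable def covParam (K : Set V) : ℝ :=
  sInf {r : ℝ | ∃ k : ℕ, ∃ lam : Fin k → ℝ, ∃ t : Fin k → V,
    (∀ i, 0 < lam i ∧ lam i < 1) ∧
    (K ⊆ ⋃ i, (fun x => lam i • x + t i) '' K) ∧
    r = ∑ i, 1 / (1 - lam i)}

/-- The (multiplicative) Banach–Mazur distance. -/
noncomputable def distBM {d : ℕ} (K L : Set (Fin d → ℝ)) : ℝ :=
  sInf {δ : ℝ | 1 ≤ δ ∧ ∃ T : (Fin d → ℝ) ≃ₗ[ℝ] (Fin d → ℝ), ∃ a ∈ K, ∃ b ∈ L,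
    (fun x => x - b) '' L ⊆ T '' ((fun x => x - a) '' K) ∧
    T '' ((fun x => x - a) '' K) ⊆ δ • ((fun x => x - b) '' L)}

end Defs

/-
A cover of `K` by `m` translates of `lam • K` is admissible for `C(K)`, with sum `m / (1 - lam)`.
Letting `lam` tend to the infimum `γ_m(K)` along such covers gives `C(K) ≤ m / (1 - γ_m(K))`
whenever `γ_m(K) < 1`, so already the weak covering index bounds `C(K)`. The infimum defining
`coin(K)` is not the junk value of an empty set: finitely many balls small enough to fit inside
a translate of `(1 / 2) • K` cover `K`.
-/

open Filter Topology

section CoveringIndices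

variable {V : Type*} [NormedAddCommGroup V] [NormedSpace ℝ V] {K : Set V} {lam : ℝ} {m : ℕ}

theorem CoversWith.pos (h : CoversWith K lam m) (hK : K.Nonempty) : 0 < m := by
  obtain ⟨t, ht⟩ := h
  obtain ⟨x, hx⟩ := hK
  obtain ⟨i, -⟩ := mem_iUnion.1 (ht hx)
  exact i.pos

theorem coversWith_one (hm : 0 < m) : CoversWith K 1 m :=
  ⟨0, fun x hx => mem_iUnion.2 ⟨⟨0, hm⟩, x, hx, by simp⟩⟩

theorem bddBelow_setOf_coversWith : BddBelow {lam : ℝ | 0 < lam ∧ CoversWith K lam m} :=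
  ⟨0, fun _ h => h.1.le⟩

theorem gammaC_le_of_coversWith (hlam : 0 < lam) (h : CoversWith K lam m) : gammaC m K ≤ lam :=
  csInf_le bddBelow_setOf_coversWith ⟨hlam, h⟩

theorem ball_subset_image_smul_add {p : V} {r : ℝ} (hlam : lam ≠ 0) (hp : Metric.ball p r ⊆ K)
    (x : V) :
    Metric.ball x (‖lam‖ * r) ⊆ (fun y => lam • y + (x - lam • p)) '' K :=
  calc Metric.ball x (‖lam‖ * r)
      = (fun y => lam • y + (x - lam • p)) '' Metric.ball p r := by
        rw [← image_image (· + (x - lam • p)) (lam • ·), image_smul, smul_ball hlam]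
        simp
    _ ⊆ _ := image_mono hp

theorem exists_coversWith_of_totallyBounded (hK : TotallyBounded K)
    (hKint : (interior K).Nonempty) (hlam : lam ≠ 0) : ∃ m, CoversWith K lam m := by
  obtain ⟨p, hp⟩ := hKint
  obtain ⟨r, hr, hball⟩ := Metric.mem_nhds_iff.1 (mem_interior_iff_mem_nhds.1 hp)
  obtain ⟨s, hs, hcover⟩ :=
    Metric.totallyBounded_iff.1 hK (‖lam‖ * r) (mul_pos (norm_pos_iff.2 hlam) hr)
  obtain ⟨m, c, -, rfl⟩ := hs.fin_param
  rw [biUnion_range] at hcover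
  exact ⟨m, fun i => c i - lam • p,
    hcover.trans (iUnion_mono fun i => ball_subset_image_smul_add hlam hball (c i))⟩

theorem exists_gammaC_le_of_totallyBounded (hK : TotallyBounded K)
    (hKint : (interior K).Nonempty) (hlam : 0 < lam) : ∃ m, 0 < m ∧ gammaC m K ≤ lam := by
  obtain ⟨m, hm⟩ := exists_coversWith_of_totallyBounded hK hKint hlam.ne'
  exact ⟨m, hm.pos (hKint.mono interior_subset), gammaC_le_of_coversWith hlam hm⟩

theorem covParam_le_sum {k : ℕ} {lam : Fin k → ℝ} {t : Fin k → V}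
    (hlam : ∀ i, 0 < lam i ∧ lam i < 1) (hK : K ⊆ ⋃ i, (fun x => lam i • x + t i) '' K) :
    covParam K ≤ ∑ i, 1 / (1 - lam i) := by
  refine csInf_le ⟨0, ?_⟩ ⟨k, lam, t, hlam, hK, rfl⟩
  rintro _ ⟨k, lam, t, hlam, -, rfl⟩
  exact Finset.sum_nonneg fun i _ => one_div_nonneg.2 (sub_nonneg.2 (hlam i).2.le)

theorem covParam_le_of_coversWith (hlam : 0 < lam) (hlam' : lam < 1) (h : CoversWith K lam m) :
    covParam K ≤ m / (1 - lam) := by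
  obtain ⟨t, ht⟩ := h
  calc covParam K ≤ ∑ _i : Fin m, 1 / (1 - lam) := covParam_le_sum (fun _ => ⟨hlam, hlam'⟩) ht
    _ = m / (1 - lam) := by simp [div_eq_mul_inv]

theorem covParam_le_div_one_sub_gammaC (hm : 0 < m) (hγ : gammaC m K < 1) :
    covParam K ≤ m / (1 - gammaC m K) := by
  have hne : {lam : ℝ | 0 < lam ∧ CoversWith K lam m}.Nonempty :=
    ⟨1, one_pos, coversWith_one hm⟩
  have hfreq : ∃ᶠ lam in 𝓝[≥] gammaC m K, 0 < lam ∧ CoversWith K lam m :=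
    (isGLB_csInf hne bddBelow_setOf_coversWith).frequently_mem hne
  have hlt : ∀ᶠ lam in 𝓝[≥] gammaC m K, lam < 1 :=
    eventually_nhdsWithin_of_eventually_nhds (eventually_lt_nhds hγ)
  have hcont : ContinuousAt (fun lam : ℝ => m / (1 - lam)) (gammaC m K) :=
    continuousAt_const.div (continuousAt_const.sub continuousAt_id) (sub_pos.2 hγ).ne'
  exact ge_of_tendsto_of_frequently hcont.continuousWithinAt.tendsto <|
    (hfreq.and_eventually hlt).mono fun _ h => covParam_le_of_coversWith h.1.1 h.2 h.1.2

theorem covParam_le_wcoin (h : ∃ m, 0 < m ∧ gammaC m K < 1) : covParam K ≤ wcoin K := by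
  obtain ⟨m, hm, hγ⟩ := h
  refine le_csInf ⟨_, m, hm, hγ, rfl⟩ ?_
  rintro _ ⟨m, hm, hγ, rfl⟩
  exact covParam_le_div_one_sub_gammaC hm hγ

theorem wcoin_le_coin (h : ∃ m, 0 < m ∧ gammaC m K ≤ 1 / 2) : wcoin K ≤ coin K := by
  obtain ⟨m, hm, hγ⟩ := h
  refine csInf_le_csInf ⟨0, ?_⟩ ⟨_, m, hm, hγ, rfl⟩ ?_
  · rintro _ ⟨m, -, hγ, rfl⟩
    exact div_nonneg m.cast_nonneg (sub_nonneg.2 hγ.le)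
  · rintro _ ⟨m, hm, hγ, rfl⟩
    exact ⟨m, hm, hγ.trans_lt one_half_lt_one, rfl⟩

theorem covParam_le_coin_general (hK : TotallyBounded K) (hKint : (interior K).Nonempty) :
    covParam K ≤ coin K := by
  obtain ⟨m, hm, hγ⟩ := exists_gammaC_le_of_totallyBounded hK hKint one_half_pos
  exact (covParam_le_wcoin ⟨m, hm, hγ.trans_lt one_half_lt_one⟩).trans (wcoin_le_coin ⟨m, hm, hγ⟩)

end CoveringIndices

/-- the covering parameter is at most the covering index. -/
theorem covParam_le_coin (d : ℕ) (K : Set (Fin d → ℝ)) (hK : IsConvexBody K) :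
    covParam K ≤ coin K :=
  covParam_le_coin_general hK.1.totallyBounded hK.2.2
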